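/- arXiv:2402.04468 — 3 statements merged into one kernel-verified Lean document; each statement's English description precedes it below -/
import Mathlib

section
/- Let V be a finite-dimensional unital associative algebra over a field k of characteristic zero, and suppose the trace form g(x,y) := tr(L_{x*y}) (where L_a denotes left multiplication by a) is a nondegenerate bilinear form on V. Then V decomposes as an internal direct sum of vector subspaces V = [V,V] ⊕ Z(V), where [V,V] is the linear span of commutators and Z(V) is the center; i.e., these two subspaces are complementary submodules of V. -/
/-!
Write `t a = tr L_a` and `g x y = t (x * y)`. Since `t` vanishes on commutators, `g` is symmetric
and `g z [x, y] = g [z, x] y`, so nondegeneracy identifies the centre with the orthogonal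
complement of `[V, V]`. For a symmetric form on a finite-dimensional space, a subspace and its
orthogonal are complementary as soon as they are disjoint, so only `[V, V] ∩ Z(V) = 0` is left.

Let `z` be central and in `[V, V]`. Then `z * w ∈ [V, V]` for all `w` in `k[z]` (even for all
central `w`), hence `t (z * w) = 0`. The Fitting idempotent `e` of `z` has the form `z * w` with
`w ∈ k[z]`, and `t e` is the rank of the projection `L_e`; in characteristic zero this forces
`e = 0`, i.e. `z` is nilpotent (`exists_fitting_idempotent`, `eq_zero_of_idempotent_of_trace`).
As `z` is central, `z * y` is nilpotent for all `y`, so `g z y = 0` and `z = 0`.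
-/

open Polynomial in
/-- The Fitting idempotent of an algebraic element `z`: some multiple `z * p(z)` is idempotent,
and it vanishes only if `z` is nilpotent. -/
lemma exists_fitting_idempotent {k V : Type*} [Field k] [Ring V] [Algebra k V]
    {z : V} (hz : IsIntegral k z) :
    ∃ p : k[X], IsIdempotentElem (z * aeval z p) ∧ (z * aeval z p = 0 → IsNilpotent z) := by
  obtain ⟨q, hq, hndvd⟩ :=
    (minpoly k z).exists_eq_pow_rootMultiplicity_mul_and_not_dvd (minpoly.ne_zero hz) 0
  rw [C_0, sub_zero] at hq hndvd
  set n := (minpoly k z).rootMultiplicity 0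
  have hcop : IsCoprime (X ^ (n + 1) : k[X]) q :=
    ((prime_X.irreducible.coprime_iff_not_dvd).2 hndvd).pow_left
  obtain ⟨a, b, hab⟩ := hcop
  have hzero : aeval z (X ^ (n + 1) * q) = 0 := by
    have h : X ^ (n + 1) * q = X * minpoly k z := by rw [hq]; ring
    rw [h, map_mul, minpoly.aeval, mul_zero]
  have he : z * aeval z (a * X ^ n) = aeval z (a * X ^ (n + 1)) := by
    have h : a * X ^ (n + 1) = X * (a * X ^ n) := by ring
    rw [h, map_mul (aeval z) X, aeval_X]
  refine ⟨a * X ^ n, ?_, fun h0 => ⟨n + 1, ?_⟩⟩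
  · -- `e - e² = a X^(n+1) * (b q)`, a multiple of the annihilating polynomial `X^(n+1) q`.
    have h : a * X ^ (n + 1) * (a * X ^ (n + 1)) =
        a * X ^ (n + 1) - a * b * (X ^ (n + 1) * q) := by
      linear_combination (a * X ^ (n + 1)) * hab
    rw [IsIdempotentElem, he, ← map_mul, h, map_sub, map_mul (aeval z) (a * b), hzero,
      mul_zero, sub_zero]
  · have h : (X ^ (n + 1) : k[X]) =
        X ^ (n + 1) * (a * X ^ (n + 1)) + b * (X ^ (n + 1) * q) := by
      linear_combination (-X ^ (n + 1)) * hab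
    have h' := congrArg (aeval z) h
    rw [map_add, map_mul, map_mul (aeval z) b, hzero, ← he, h0] at h'
    simpa using h'

lemma eq_zero_of_idempotent_of_trace {k V : Type*} [Field k] [CharZero k] [Ring V] [Algebra k V]
    [FiniteDimensional k V] {e : V} (he : IsIdempotentElem e)
    (ht : LinearMap.trace k V (LinearMap.mulLeft k e) = 0) : e = 0 := by
  have hL : IsIdempotentElem (LinearMap.mulLeft k e) := by
    rw [IsIdempotentElem, Module.End.mul_eq_comp, ← LinearMap.mulLeft_mul, he.eq]
  simpa using LinearMap.congr_fun (LinearMap.IsIdempotentElem.eq_zero_of_trace_eq_zero hL ht) 1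

/-- If the trace form `g(x,y) = tr(L_{x*y})` of a finite-dimensional unital associative
algebra `V` over a field of characteristic zero is nondegenerate, then
`V = [V,V] ⊕ Z(V)` as an internal direct sum of vector subspaces. -/
theorem stmt_1 (k V : Type*) [Field k] [CharZero k] [Ring V] [Algebra k V]
    [FiniteDimensional k V]
    (hnondeg : ∀ x : V,
      (∀ y : V, LinearMap.trace k V (LinearMap.mulLeft k (x * y)) = 0) → x = 0) :
    IsCompl (Submodule.span k {c : V | ∃ x y : V, c = x * y - y * x})
      (Subalgebra.center k V).toSubmodule := by
  let t : V →ₗ[k] k := LinearMap.trace k V ∘ₗ LinearMap.mul k V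
  have ht (a : V) : LinearMap.trace k V (LinearMap.mulLeft k a) = t a := rfl
  simp only [ht] at hnondeg
  have tcomm (x y : V) : t (x * y) = t (y * x) := by
    rw [← ht, ← ht, LinearMap.mulLeft_mul, LinearMap.mulLeft_mul]
    exact LinearMap.trace_mul_comm k _ _
  let B : LinearMap.BilinForm k V := (LinearMap.mul k V).compr₂ t
  have hB (x y : V) : B x y = t (x * y) := rfl
  have hBrefl : B.IsRefl := fun x y h => by rw [hB, tcomm, ← hB]; exact h
  have hcenter : (Subalgebra.center k V).toSubmodule =
      B.orthogonal (Submodule.span k {c : V | ∃ x y : V, c = x * y - y * x}) := by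
    ext z
    rw [Subalgebra.mem_toSubmodule, Subalgebra.mem_center_iff,
      LinearMap.BilinForm.mem_orthogonal_iff]
    constructor
    · intro hz c hc
      change B c z = 0
      induction hc using Submodule.span_induction with
      | mem c hc =>
        obtain ⟨x, y, rfl⟩ := hc
        rw [hB, sub_mul, map_sub, mul_assoc, tcomm x, mul_assoc y, mul_assoc y, hz x, sub_self]
      | zero => simp
      | add c d _ _ hc hd => rw [map_add, LinearMap.add_apply, hc, hd, add_zero]
      | smul r c _ hc => rw [map_smul, LinearMap.smul_apply, hc, smul_zero]
    · intro hz x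
      refine sub_eq_zero.1 (hnondeg _ fun y => ?_)
      have h : B (y * x - x * y) z = 0 := hz _ (Submodule.subset_span ⟨y, x, rfl⟩)
      rw [hB, sub_mul, map_sub] at h
      rw [sub_mul, map_sub, tcomm (x * z), mul_assoc z, tcomm z, ← mul_assoc]
      exact h
  rw [hcenter, LinearMap.BilinForm.isCompl_orthogonal_iff_disjoint hBrefl, ← hcenter,
    Submodule.disjoint_def]
  intro z hzc hz
  have horth (w : V) (hw : w ∈ Subalgebra.center k V) : t (z * w) = 0 := by
    rw [← Subalgebra.mem_toSubmodule, hcenter] at hw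
    exact LinearMap.BilinForm.mem_orthogonal_iff.1 hw z hzc
  rw [Subalgebra.mem_toSubmodule] at hz
  obtain ⟨p, hidem, hnil⟩ := exists_fitting_idempotent (Algebra.IsIntegral.isIntegral (R := k) z)
  have hp : Polynomial.aeval z p ∈ Subalgebra.center k V :=
    Algebra.adjoin_le (Set.singleton_subset_iff.2 hz) (Polynomial.aeval_mem_adjoin_singleton k z)
  have hznil : IsNilpotent z := hnil (eq_zero_of_idempotent_of_trace (k := k) hidem (horth _ hp))
  refine hnondeg z fun y => ?_
  have hcomm : Commute z y := (Subalgebra.mem_center_iff.1 hz y).symm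
  have hzy : IsNilpotent (Algebra.lmul k V (z * y)) :=
    (hcomm.isNilpotent_mul_right hznil).map (Algebra.lmul k V)
  exact (LinearMap.isNilpotent_trace_of_isNilpotent hzy).eq_zero
end

section
/- Let V be a finite-dimensional unital associative algebra over a field k of characteristic zero such that the trace form g(x,y) := tr(L_{x*y}) is nondegenerate. Then the composite linear map Z(V) → V → V/[V,V], given by including the center into V and then projecting to the quotient by the span of commutators, is a linear isomorphism. (In particular the zeroth Hochschild homology V/[V,V] is isomorphic to the center Z(V).) -/
/-!
The trace form `g(x, y) = tr L_{xy}` is symmetric and satisfies `g(z, xy - yx) = g(zx - xz, y)`,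
so nondegeneracy identifies the center with the orthogonal complement of `[V,V]`. Hence it is
enough to show `Z(V) ∩ [V,V] = 0`: a subspace meeting its orthogonal complement trivially is
complementary to it.

A central nilpotent `z` is zero, since each `z * y` is nilpotent and so has trace zero. In the
commutative artinian ring `Z(V)` some identity `z ^ n = z ^ (n + 1) * y` holds, whence
`z - z * y * z` is nilpotent, therefore zero, and `e = z * y` is an idempotent with `e * z = z`.
If also `z ∈ [V,V]`, then `tr L_e = g(z, y) = 0`, because `y` is orthogonal to `[V,V]`; in
characteristic zero an idempotent operator of trace zero vanishes, so `e = 0` and `z = 0`.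
-/

namespace TraceFormCenter

variable (k V : Type*) [Field k] [Ring V] [Algebra k V]

/-- The trace form `(x, y) ↦ tr L_{xy}`. -/
noncomputable def traceForm : LinearMap.BilinForm k V :=
  (LinearMap.mul k V).compr₂ (LinearMap.trace k V ∘ₗ LinearMap.mul k V)

/-- The linear span of all commutators, `[V,V]`. -/
def commSpan : Submodule k V := Submodule.span k {c : V | ∃ x y : V, c = x * y - y * x}

variable {k V}

lemma traceForm_apply (x y : V) :
    traceForm k V x y = LinearMap.trace k V (LinearMap.mulLeft k (x * y)) := rfl

lemma traceForm_comm (x y : V) : traceForm k V x y = traceForm k V y x := by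
  simp only [traceForm_apply, LinearMap.mulLeft_mul]
  exact LinearMap.trace_mul_comm k _ _

lemma traceForm_isSymm : (traceForm k V).IsSymm := ⟨fun x y => traceForm_comm x y⟩

lemma traceForm_mul_left (x y z : V) :
    traceForm k V (x * y) z = traceForm k V x (y * z) := by
  simp only [traceForm_apply, mul_assoc]

lemma traceForm_commutator (x y z : V) :
    traceForm k V (x * y - y * x) z = traceForm k V (z * x - x * z) y := by
  have h1 : traceForm k V (x * y) z = traceForm k V (z * x) y := by
    rw [traceForm_comm, traceForm_mul_left]
  have h2 : traceForm k V (y * x) z = traceForm k V (x * z) y := by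
    rw [traceForm_mul_left, traceForm_comm]
  rw [map_sub, map_sub, LinearMap.sub_apply, LinearMap.sub_apply, h1, h2]

lemma orthogonal_commSpan (hnondeg : ∀ x : V, (∀ y, traceForm k V x y = 0) → x = 0) :
    (traceForm k V).orthogonal (commSpan k V) = (Subalgebra.center k V).toSubmodule := by
  ext z
  rw [LinearMap.BilinForm.mem_orthogonal_iff, Subalgebra.mem_toSubmodule,
    Subalgebra.mem_center_iff]
  constructor
  · intro h x
    refine (sub_eq_zero.mp (hnondeg _ fun y => ?_)).symm
    rw [← traceForm_commutator]
    exact h _ (Submodule.subset_span ⟨x, y, rfl⟩)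
  · intro h c hc
    change traceForm k V c z = 0
    induction hc using Submodule.span_induction with
    | mem c hc =>
      obtain ⟨x, y, rfl⟩ := hc
      rw [traceForm_commutator, h x, sub_self, map_zero, LinearMap.zero_apply]
    | zero => simp
    | add a b _ _ ha hb => rw [map_add, LinearMap.add_apply, ha, hb, add_zero]
    | smul r a _ ha => rw [map_smul, LinearMap.smul_apply, ha, smul_zero]

lemma isReduced_center (hnondeg : ∀ x : V, (∀ y, traceForm k V x y = 0) → x = 0) :
    IsReduced (Subalgebra.center k V) := by
  refine ⟨fun z hz => Subtype.ext (hnondeg _ fun y => ?_)⟩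
  have hz' : IsNilpotent (z : V) := hz.map (Subalgebra.center k V).val
  have hcomm : Commute (z : V) y := (Subalgebra.mem_center_iff.mp z.2 y).symm
  have hzy : IsNilpotent (LinearMap.mulLeft k ((z : V) * y)) :=
    (hcomm.isNilpotent_mul_right hz').map (Algebra.lmul k V)
  exact (LinearMap.isNilpotent_trace_of_isNilpotent hzy).eq_zero

/-- A reduced commutative artinian ring is von Neumann regular. -/
lemma exists_mul_mul_eq (C : Type*) [CommRing C] [IsArtinianRing C] [IsReduced C] (z : C) :
    ∃ y, z * y * z = z := by
  obtain ⟨n, y, hy⟩ := IsArtinian.exists_pow_succ_smul_dvd z (1 : C)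
  refine ⟨y, ?_⟩
  have hnil : IsNilpotent (z - z * y * z) := by
    refine ⟨n + 1, ?_⟩
    have h : z ^ (n + 1) * (1 - z * y) = 0 := by
      simp only [smul_eq_mul, Nat.succ_eq_add_one] at hy
      linear_combination (-z) * hy
    calc (z - z * y * z) ^ (n + 1) = z ^ (n + 1) * (1 - z * y) * (1 - z * y) ^ n := by
          rw [show z - z * y * z = z * (1 - z * y) by ring, mul_pow, pow_succ (1 - z * y)]; ring
      _ = 0 := by rw [h, zero_mul]
  exact (sub_eq_zero.mp hnil.eq_zero).symm

lemma disjoint_commSpan [CharZero k] [FiniteDimensional k V]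
    (hnondeg : ∀ x : V, (∀ y, traceForm k V x y = 0) → x = 0) :
    Disjoint (commSpan k V) ((traceForm k V).orthogonal (commSpan k V)) := by
  rw [Submodule.disjoint_def]
  intro z hzW hzC
  have horth := orthogonal_commSpan hnondeg
  rw [horth] at hzC
  have := isReduced_center hnondeg
  have : IsArtinianRing (Subalgebra.center k V) := IsArtinianRing.of_finite k _
  obtain ⟨y, hy⟩ := exists_mul_mul_eq (Subalgebra.center k V) ⟨z, hzC⟩
  have hy' : z * y * z = z := congrArg Subtype.val hy
  have hidem : IsIdempotentElem (LinearMap.mulLeft k (z * (y : V))) := by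
    change _ * _ = _
    rw [Module.End.mul_eq_comp, ← LinearMap.mulLeft_mul, ← mul_assoc, hy']
  have htr : LinearMap.trace k V (LinearMap.mulLeft k (z * (y : V))) = 0 := by
    have hyo : (y : V) ∈ (traceForm k V).orthogonal (commSpan k V) := by
      rw [horth]; exact y.2
    exact hyo z hzW
  have h0 := LinearMap.IsIdempotentElem.eq_zero_of_trace_eq_zero hidem htr
  have := LinearMap.congr_fun h0 z
  rwa [LinearMap.mulLeft_apply, hy', LinearMap.zero_apply] at this

end TraceFormCenter

open TraceFormCenter in

/-- If the trace form of a finite-dimensional unital associative algebra `V` over a field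
of characteristic zero is nondegenerate, then the composite `Z(V) → V → V/[V,V]` of the
inclusion of the center with the quotient projection is a linear isomorphism. -/
theorem stmt_2 (k V : Type*) [Field k] [CharZero k] [Ring V] [Algebra k V]
    [FiniteDimensional k V]
    (hnondeg : ∀ x : V,
      (∀ y : V, LinearMap.trace k V (LinearMap.mulLeft k (x * y)) = 0) → x = 0) :
    Function.Bijective
      ((Submodule.span k {c : V | ∃ x y : V, c = x * y - y * x}).mkQ.comp
        (Subalgebra.center k V).toSubmodule.subtype) := by
  have hc : IsCompl (commSpan k V) (Subalgebra.center k V).toSubmodule := by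
    rw [← orthogonal_commSpan hnondeg]
    exact (LinearMap.BilinForm.isCompl_orthogonal_iff_disjoint traceForm_isSymm.isRefl).mpr
      (disjoint_commSpan hnondeg)
  exact (Submodule.quotientEquivOfIsCompl _ _ hc).symm.bijective
end

section
/- Let V be a finite-dimensional unital associative algebra over a field k of characteristic zero such that the trace form g(x,y) := tr(L_{x*y}) is nondegenerate. Define γ(x,y) := tr of the linear endomorphism z ↦ x*z*y of V. Then for x ∈ V one has γ(x,y) = 0 for all y ∈ V if and only if x lies in the linear span of commutators [V,V]; i.e., the kernel (radical) of the bilinear form γ is exactly [V,V]. -/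
/-!
Write `t(x) = tr(L_x)`; it vanishes on commutators since `L_{ab} = L_a L_b`.

Commutators lie in the radical of `γ` because left multiplications commute with right
multiplications, so `tr(L_a L_b R_y) = tr(L_b L_a R_y)` by cyclicity of the trace.

Conversely, suppose `γ(x, ·) = 0` and `x ∉ [V,V]`. Choose a linear functional `f` vanishing on
`[V,V]` with `f x ≠ 0`. By nondegeneracy `f = t(w * ·)` for some `w`, and vanishing on commutators
gives `t((w a - a w) b) = t(w (a b - b a)) = 0` for all `a, b`, so `w` is central. Then `R_w = L_w`,
hence `f x = t(w x) = t(x w) = tr(L_x R_w) = γ(x, w) = 0`, a contradiction.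
-/

theorem trace_mulLeft_mul_comm (k : Type*) {V : Type*} [Field k] [Ring V] [Algebra k V] (a b : V) :
    LinearMap.trace k V (LinearMap.mulLeft k (a * b)) =
      LinearMap.trace k V (LinearMap.mulLeft k (b * a)) := by
  rw [LinearMap.mulLeft_mul, LinearMap.mulLeft_mul]
  exact LinearMap.trace_mul_comm k (LinearMap.mulLeft k a) (LinearMap.mulLeft k b)

/-- Nondegeneracy of the trace form represents every linear functional as `y ↦ tr(L_{w * y})`. -/
theorem exists_trace_mulLeft_eq {k V : Type*} [Field k] [Ring V] [Algebra k V]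
    [FiniteDimensional k V]
    (hnondeg : ∀ x : V,
      (∀ y : V, LinearMap.trace k V (LinearMap.mulLeft k (x * y)) = 0) → x = 0)
    (f : Module.Dual k V) :
    ∃ w : V, ∀ y : V, LinearMap.trace k V (LinearMap.mulLeft k (w * y)) = f y := by
  let B : V →ₗ[k] Module.Dual k V :=
    (LinearMap.mul k V).compr₂ (LinearMap.trace k V ∘ₗ LinearMap.mul k V)
  have hB : ∀ x y, B x y = LinearMap.trace k V (LinearMap.mulLeft k (x * y)) := fun _ _ => rfl
  have hinj : Function.Injective B := by
    rw [injective_iff_map_eq_zero]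
    intro x hx
    exact hnondeg x fun y => by rw [← hB, hx, LinearMap.zero_apply]
  obtain ⟨w, hw⟩ := (LinearMap.injective_iff_surjective_of_finrank_eq_finrank
    (Subspace.dual_finrank_eq (K := k) (V := V)).symm).1 hinj f
  exact ⟨w, fun y => by rw [← hB, hw]⟩

/-- If the trace form of a finite-dimensional unital associative algebra `V` over a field
of characteristic zero is nondegenerate, then the radical of the pairing
`γ(x,y) = tr(z ↦ x*z*y)` is exactly the commutator subspace `[V,V]`. -/
theorem stmt_4 (k V : Type*) [Field k] [CharZero k] [Ring V] [Algebra k V]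
    [FiniteDimensional k V]
    (hnondeg : ∀ x : V,
      (∀ y : V, LinearMap.trace k V (LinearMap.mulLeft k (x * y)) = 0) → x = 0) :
    ∀ x : V,
      (∀ y : V,
        LinearMap.trace k V (LinearMap.mulLeft k x ∘ₗ LinearMap.mulRight k y) = 0) ↔
      x ∈ Submodule.span k {c : V | ∃ a b : V, c = a * b - b * a} := by
  intro x
  constructor
  · intro hx
    by_contra hmem
    obtain ⟨f, hfx, hf⟩ := Submodule.exists_le_ker_of_notMem hmem
    obtain ⟨w, hw⟩ := exists_trace_mulLeft_eq hnondeg f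
    have hf' : ∀ a b : V, f (a * b) = f (b * a) := fun a b => by
      have h : f (a * b - b * a) = 0 := hf (Submodule.subset_span ⟨a, b, rfl⟩)
      rwa [map_sub, sub_eq_zero] at h
    have hcentral : ∀ a : V, w * a = a * w := fun a => by
      rw [← sub_eq_zero]
      refine hnondeg _ fun b => ?_
      have hlin : LinearMap.mulLeft k ((w * a - a * w) * b) =
          LinearMap.mulLeft k (w * (a * b)) - LinearMap.mulLeft k (a * (w * b)) := by
        ext z
        simp [sub_mul, mul_assoc]
      rw [hlin, map_sub, trace_mulLeft_mul_comm k a, mul_assoc, hw, hw, hf' a b, sub_self]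
    apply hfx
    rw [← hw x, ← hx w]
    congr 1
    ext z
    simp [hcentral]
  · intro hx y
    induction hx using Submodule.span_induction with
    | mem c hc =>
      obtain ⟨a, b, rfl⟩ := hc
      have hlin : LinearMap.mulLeft k (a * b - b * a) ∘ₗ LinearMap.mulRight k y =
          LinearMap.mulLeft k a * (LinearMap.mulLeft k b * LinearMap.mulRight k y) -
          (LinearMap.mulLeft k b * LinearMap.mulRight k y) * LinearMap.mulLeft k a := by
        ext z
        simp [sub_mul, mul_assoc]
      rw [hlin, map_sub, LinearMap.trace_mul_comm, sub_self]
    | zero => simp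
    | add u v _ _ hu hv =>
      have hlin : LinearMap.mulLeft k (u + v) ∘ₗ LinearMap.mulRight k y =
          LinearMap.mulLeft k u ∘ₗ LinearMap.mulRight k y +
          LinearMap.mulLeft k v ∘ₗ LinearMap.mulRight k y := by
        ext z
        simp [add_mul]
      rw [hlin, map_add, hu, hv, add_zero]
    | smul r u _ hu =>
      have hlin : LinearMap.mulLeft k (r • u) ∘ₗ LinearMap.mulRight k y =
          r • (LinearMap.mulLeft k u ∘ₗ LinearMap.mulRight k y) := by
        ext z
        simp
      rw [hlin, map_smul, hu, smul_zero]
end
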